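/- Let C be a cartesian category, p : E → B an arrow, P : C → C a pullback-preserving endofunctor, leg_X : PX → B natural, subst_X : PX ×_B E → X natural, and suppose η_Y : Y → P(Y ×_B E) (for Y ∈ C/B) is a natural transformation making (P, leg) : C → C/B a right adjoint of (− ×_B E) : C/B → C with unit η and counit subst. Define wk_X = P(π₁) ∘ η_{X×B} (via (X × B) ×_B E ≅ X × E) and proj = η_B (via B ×_B E ≅ E). Then for every object (f : Y → B) of C/B, the unit component η_Y satisfies P(π₁) ∘ η_Y = wk_Y ∘ (id_Y, f) and P(π₂) ∘ η_Y = proj ∘ f; in particular η is uniquely determined by the pair (wk, proj). -/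

import Mathlib

open CategoryTheory CategoryTheory.Limits

universe v u

variable {C : Type u} [Category.{v} C]



/-- The functor `(P, leg) : C ⥤ C/B` determined by an endofunctor `P : C ⥤ C` and a natural
transformation `leg_X : P X ⟶ B`. -/
@[simps]
def legFunctor {B : C} (P : C ⥤ C) (leg : ∀ X : C, P.obj X ⟶ B)
    (hleg : ∀ (X Y : C) (f : X ⟶ Y), P.map f ≫ leg Y = leg X) : C ⥤ Over B where
  obj X := Over.mk (leg X)
  map {X Y} f := Over.homMk (P.map f) (hleg X Y f)

/-- The property that a family `η_Y : Y ⟶ P (Y ×_B E)` (for `Y ∈ C/B`) is a natural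
transformation making `(P, leg) : C ⥤ C/B` a right adjoint of `(− ×_B E) : C/B ⥤ C` with
unit `η` and counit `subst`: each `η_Y` is a morphism over `B`, `η` is natural in `Y`, and
the two triangle identities hold.  In the second triangle identity, the morphism
`η_Y ×_B E : Y ×_B E ⟶ P (Y ×_B E) ×_B E` is characterized by its compositions with the two
pullback projections. -/
structure IsAdjointUnit [HasFiniteLimits C] {E B : C} (p : E ⟶ B)
    (P : C ⥤ C) (leg : ∀ X : C, P.obj X ⟶ B) (subst : ∀ X : C, pullback (leg X) p ⟶ X)
    (η : ∀ Y : Over B, Y.left ⟶ P.obj (pullback Y.hom p)) : Prop where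
  /-- Each `η_Y` is a morphism `Y ⟶ (P (Y ×_B E), leg)` in `C/B`. -/
  over_base : ∀ Y : Over B, η Y ≫ leg (pullback Y.hom p) = Y.hom
  /-- `η` is natural in `Y ∈ C/B`. -/
  natural : ∀ (Y Z : Over B) (f : Y ⟶ Z),
    f.left ≫ η Z = η Y ≫ P.map ((Over.pullback p ⋙ Over.forget E).map f)
  /-- First triangle identity: `P (subst_X) ∘ η_{(P X, leg_X)} = id_{P X}`. -/
  triangle₁ : ∀ X : C, η (Over.mk (leg X)) ≫ P.map (subst X) = 𝟙 (P.obj X)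
  /-- Second triangle identity: `subst_{Y ×_B E} ∘ (η_Y ×_B E) = id_{Y ×_B E}`. -/
  triangle₂ : ∀ (Y : Over B)
    (u : pullback Y.hom p ⟶ pullback (leg (pullback Y.hom p)) p),
    u ≫ pullback.fst (leg (pullback Y.hom p)) p = pullback.fst Y.hom p ≫ η Y →
    u ≫ pullback.snd (leg (pullback Y.hom p)) p = pullback.snd Y.hom p →
    u ≫ subst (pullback Y.hom p) = 𝟙 (pullback Y.hom p)

/-- Given a family `η_Y : Y ⟶ P (Y ×_B E)`, the induced arrow `wk_X = P(π₁) ∘ η_{X×B}`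
(via the isomorphism `(X × B) ×_B E ≅ X × E`, under which `P π₁` corresponds to `P` applied
to the composite of the first pullback projection with the first product projection). -/
noncomputable def wkOfUnit [HasFiniteLimits C] {E B : C} (p : E ⟶ B) (P : C ⥤ C)
    (η : ∀ Y : Over B, Y.left ⟶ P.obj (pullback Y.hom p)) (X : C) :
    X ⨯ B ⟶ P.obj X :=
  η (Over.mk (prod.snd : X ⨯ B ⟶ B)) ≫
    P.map (pullback.fst (Over.mk (prod.snd : X ⨯ B ⟶ B)).hom p ≫ prod.fst)

/-- Given a family `η_Y : Y ⟶ P (Y ×_B E)`, the induced arrow `proj = η_B` followed by the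
isomorphism `B ×_B E ≅ E` (the second pullback projection). -/
noncomputable def projOfUnit [HasFiniteLimits C] {E B : C} (p : E ⟶ B) (P : C ⥤ C)
    (η : ∀ Y : Over B, Y.left ⟶ P.obj (pullback Y.hom p)) :
    B ⟶ P.obj E :=
  η (Over.mk (𝟙 B)) ≫ P.map (pullback.snd (Over.mk (𝟙 B)).hom p)

/-!
Composed with `P(π₁)` and `P(π₂)`, the unit becomes a transformation from `Y` to `P Y` and a
transformation from `Y` to the constant object `P E`, both natural in `Y ∈ C/B`. The first is
determined by its components at the objects `X × B`, because the graph `Y ⟶ Y × B` is a morphism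
of `C/B` with retraction the first projection `Y × B ⟶ Y` in `C`; the second is determined by its
component at the terminal object of `C/B`. Since `P` preserves the pullback `Y ×_B E`, the two
composites together determine the unit.
-/

section Pullback

variable {E B : C} (p : E ⟶ B) [HasPullbacksAlong p]

/-- The first projections `π₁ : Y ×_B E ⟶ Y`, as a transformation natural in `Y ∈ C/B`. -/
noncomputable def pullbackFst : Over.pullback p ⋙ Over.forget E ⟶ Over.forget B where
  app Y := pullback.fst Y.hom p
  naturality _ Z _ := pullback.lift_fst (f := Z.hom) (g := p) _ _ _

/-- The second projections `π₂ : Y ×_B E ⟶ E`, as a transformation natural in `Y ∈ C/B`. -/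
@[simps]
noncomputable def pullbackSnd :
    Over.pullback p ⋙ Over.forget E ⟶ (Functor.const (Over B)).obj E where
  app Y := pullback.snd Y.hom p
  naturality _ Z _ :=
    (pullback.lift_snd (f := Z.hom) (g := p) _ _ _).trans (Category.comp_id _).symm

variable {p} in
lemma natTrans_ext_of_pullbackFst_pullbackSnd {D : Type*} [Category* D] {F : Over B ⥤ D}
    {P : C ⥤ D} [∀ Y : Over B, PreservesLimit (cospan Y.hom p) P]
    {α β : F ⟶ (Over.pullback p ⋙ Over.forget E) ⋙ P}
    (hfst : α ≫ Functor.whiskerRight (pullbackFst p) P =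
      β ≫ Functor.whiskerRight (pullbackFst p) P)
    (hsnd : α ≫ Functor.whiskerRight (pullbackSnd p) P =
      β ≫ Functor.whiskerRight (pullbackSnd p) P) : α = β := by
  ext Y
  exact ((IsPullback.of_hasPullback Y.hom p).map P).hom_ext
    (NatTrans.congr_app hfst Y) (NatTrans.congr_app hsnd Y)

end Pullback

/-- The graph `(id_Y, f) : Y ⟶ Y × B` of the structure map `f : Y ⟶ B`, as a morphism of `C/B`
into the second projection. -/
noncomputable def graphHom {B : C} (Y : Over B) [HasBinaryProduct Y.left B] :
    Y ⟶ Over.mk (prod.snd : Y.left ⨯ B ⟶ B) :=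
  Over.homMk (prod.lift (𝟙 Y.left) Y.hom) (prod.lift_snd _ _)

lemma app_eq_map_graphHom_comp {D : Type*} [Category* D] {B : C} {F : Over B ⥤ D} {P : C ⥤ D}
    (τ : F ⟶ Over.forget B ⋙ P) (Y : Over B) [HasBinaryProduct Y.left B] :
    τ.app Y = F.map (graphHom Y) ≫ τ.app (Over.mk prod.snd) ≫ P.map prod.fst := by
  have graph_fst : P.map (graphHom Y).left ≫ P.map prod.fst = 𝟙 (P.obj Y.left) := by
    rw [← P.map_comp, ← P.map_id]
    exact congrArg P.map (prod.lift_fst _ _)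
  rw [τ.naturality_assoc]
  exact (Category.comp_id _).symm.trans (congrArg (τ.app Y ≫ ·) graph_fst.symm)

section Unit

variable [HasFiniteLimits C] {E B : C} {p : E ⟶ B} {P : C ⥤ C}

/-- The unit `η` of the adjunction, as a natural transformation between functors `C/B ⥤ C`: that
its components are morphisms over `B` is forgotten. -/
def IsAdjointUnit.natTrans {leg : ∀ X : C, P.obj X ⟶ B} {subst : ∀ X : C, pullback (leg X) p ⟶ X}
    {η : ∀ Y : Over B, Y.left ⟶ P.obj (pullback Y.hom p)} (hη : IsAdjointUnit p P leg subst η) :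
    Over.forget B ⟶ (Over.pullback p ⋙ Over.forget E) ⋙ P where
  app := η
  naturality := hη.natural

lemma wkOfUnit_app_eq (η : Over.forget B ⟶ (Over.pullback p ⋙ Over.forget E) ⋙ P) (X : C) :
    wkOfUnit p P η.app X =
      (η ≫ Functor.whiskerRight (pullbackFst p) P).app (Over.mk prod.snd) ≫ P.map prod.fst := by
  rw [NatTrans.comp_app, Category.assoc]
  exact congrArg (η.app _ ≫ ·) (P.map_comp _ _)

lemma app_comp_map_fst_eq_lift_comp_wkOfUnit
    (η : Over.forget B ⟶ (Over.pullback p ⋙ Over.forget E) ⋙ P) (Y : Over B) :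
    η.app Y ≫ P.map (pullback.fst Y.hom p) =
      prod.lift (𝟙 Y.left) Y.hom ≫ wkOfUnit p P η.app Y.left := by
  rw [wkOfUnit_app_eq]
  exact app_eq_map_graphHom_comp (η ≫ Functor.whiskerRight (pullbackFst p) P) Y

lemma app_comp_map_snd_eq_hom_comp_projOfUnit
    (η : Over.forget B ⟶ (Over.pullback p ⋙ Over.forget E) ⋙ P) (Y : Over B) :
    η.app Y ≫ P.map (pullback.snd Y.hom p) = Y.hom ≫ projOfUnit p P η.app := by
  have naturality_to_terminal :=
    (η ≫ Functor.whiskerRight (pullbackSnd p) P).naturality (Over.mkIdTerminal.from Y)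
  simpa [projOfUnit] using naturality_to_terminal.symm

theorem unit_determined_by_wk_proj_general (p : E ⟶ B) (P : C ⥤ C)
    [∀ Y : Over B, PreservesLimit (cospan Y.hom p) P]
    (η : Over.forget B ⟶ (Over.pullback p ⋙ Over.forget E) ⋙ P) :
    (∀ Y : Over B,
      η.app Y ≫ P.map (pullback.fst Y.hom p) =
        prod.lift (𝟙 Y.left) Y.hom ≫ wkOfUnit p P η.app Y.left ∧
      η.app Y ≫ P.map (pullback.snd Y.hom p) = Y.hom ≫ projOfUnit p P η.app) ∧
    (∀ η' : Over.forget B ⟶ (Over.pullback p ⋙ Over.forget E) ⋙ P,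
      (∀ X : C, wkOfUnit p P η'.app X = wkOfUnit p P η.app X) →
      projOfUnit p P η'.app = projOfUnit p P η.app → η' = η) := by
  have fst_eq := app_comp_map_fst_eq_lift_comp_wkOfUnit (p := p) (P := P)
  have snd_eq := app_comp_map_snd_eq_hom_comp_projOfUnit (p := p) (P := P)
  refine ⟨fun Y => ⟨fst_eq η Y, snd_eq η Y⟩, fun η' hwk hproj => ?_⟩
  apply natTrans_ext_of_pullbackFst_pullbackSnd <;> ext Y
  · exact (fst_eq η' Y).trans (hwk Y.left ▸ (fst_eq η Y).symm)
  · exact (snd_eq η' Y).trans (hproj ▸ (snd_eq η Y).symm)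

end Unit

/-- Let `C` be a cartesian category, `p : E ⟶ B` an arrow, `P : C ⥤ C` a
pullback-preserving endofunctor, `leg_X : P X ⟶ B` natural, `subst_X : P X ×_B E ⟶ X`
natural, and suppose `η_Y : Y ⟶ P (Y ×_B E)` (for `Y ∈ C/B`) is a natural transformation
making `(P, leg) : C ⥤ C/B` a right adjoint of `(− ×_B E) : C/B ⥤ C` with unit `η` and
counit `subst`.  Define `wk_X = P(π₁) ∘ η_{X×B}` (via `(X × B) ×_B E ≅ X × E`) and
`proj = η_B` (via `B ×_B E ≅ E`).  Then for every object `(f : Y ⟶ B)` of `C/B` the unit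
component `η_Y` satisfies `P(π₁) ∘ η_Y = wk_Y ∘ (id_Y, f)` and `P(π₂) ∘ η_Y = proj ∘ f`;
in particular `η` is uniquely determined by the pair `(wk, proj)`. -/
theorem unit_determined_by_wk_proj
    {C : Type u} [Category.{v} C] [HasFiniteLimits C] {E B : C} (p : E ⟶ B)
    (P : C ⥤ C) (hP : PreservesLimitsOfShape WalkingCospan P)
    (leg : ∀ X : C, P.obj X ⟶ B)
    (hleg : ∀ (X Y : C) (f : X ⟶ Y), P.map f ≫ leg Y = leg X)
    (subst : ∀ X : C, pullback (leg X) p ⟶ X)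
    (hsubst : ∀ (X Y : C) (f : X ⟶ Y) (u : pullback (leg X) p ⟶ pullback (leg Y) p),
      u ≫ pullback.fst (leg Y) p = pullback.fst (leg X) p ≫ P.map f →
      u ≫ pullback.snd (leg Y) p = pullback.snd (leg X) p →
      u ≫ subst Y = subst X ≫ f)
    (η : ∀ Y : Over B, Y.left ⟶ P.obj (pullback Y.hom p))
    (hη : IsAdjointUnit p P leg subst η) :
    (∀ Y : Over B,
      η Y ≫ P.map (pullback.fst Y.hom p) =
        prod.lift (𝟙 Y.left) Y.hom ≫ wkOfUnit p P η Y.left ∧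
      η Y ≫ P.map (pullback.snd Y.hom p) = Y.hom ≫ projOfUnit p P η) ∧
    (∀ η' : ∀ Y : Over B, Y.left ⟶ P.obj (pullback Y.hom p),
      IsAdjointUnit p P leg subst η' →
      (∀ X : C, wkOfUnit p P η' X = wkOfUnit p P η X) →
      projOfUnit p P η' = projOfUnit p P η → η' = η) :=
  have key := unit_determined_by_wk_proj_general p P hη.natTrans
  ⟨key.1, fun _ hη' hwk hproj => congrArg NatTrans.app (key.2 hη'.natTrans hwk hproj)⟩
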